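/- Let G be a finite connected simple graph that contains two cycles having no common vertices (two cycle walks whose vertex supports are disjoint). Then the sages win on G. -/

import Mathlib

/-!
The proof rests on the notion `Knows S v`: for every colour `i`, the sages of `S` other than `v` can
play so that, whenever all of them guess wrong, the neighbours' hats tell `v` whether his own hat has
colour `i`. Three facts about it give the theorem.

* `knows_of_isCycle`: the vertices of a cycle `x 0, x 1, …, x n = x 0` know `x 0`. If `x 0` has
  colour `i`, then `x 1` guesses `0` and `x (n - 1)` guesses `1`, so both are wrong only if
  `c (x 1) ≠ 0` and `c (x (n - 1)) ≠ 1`. If `x 0` does not have colour `i`, the other sages enforce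
  the opposite: put `e 0 = 2`, `e 1 = 0`, `e 2 = 2`; if everyone is wrong and `c (x 1) ≠ 0`, then
  `c (x (k + 1)) ≠ e (c (x k))` holds inductively along the cycle, and the last sage turns this into
  `c (x (n - 1)) = 1`.
* `Knows.insert`: knowledge moves along an edge `v w`. If `v` knows whether his colour is `0`, he
  bets that "my colour is `1`" and "the colour of `w` is `i`" have the same truth value, and names the
  colour determined by these two bits. If he is wrong, then so is the bet, and `w`, who sees `v`,
  knows whether his own colour is `i`.
* `Knows.sagesWin`: if `w` knows from two sources `S`, `T` sharing only `w`, he learns whether his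
  colour is `0` from one and whether it is `1` from the other, hence his colour.

Knowledge on the first cycle, placed at a vertex closest to the second cycle, is transported along
a shortest path to the second cycle, where it meets the knowledge coming from that cycle.
-/

/-- A strategy in the "Hats" game: each sage `v` maps a coloring of his
neighbourhood to a guess in `Fin 3`. -/
def HatStrategy {V : Type*} (G : SimpleGraph V) : Type _ :=
  ∀ v : V, (G.neighborSet v → Fin 3) → Fin 3

/-- The sage at `v` guesses his own hat color correctly for placement `c`. -/
def GuessesRight {V : Type*} {G : SimpleGraph V} (f : HatStrategy G)
    (c : V → Fin 3) (v : V) : Prop :=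
  f v (fun u => c u.1) = c v

/-- The sages win the "Hats" game on `G`. -/
def SagesWin {V : Type*} (G : SimpleGraph V) : Prop :=
  ∃ f : HatStrategy G, ∀ c : V → Fin 3, ∃ v : V, GuessesRight f c v

/-- The hats seen from `v`, extended by the junk value `0` to the vertices which `v` does not see. -/
noncomputable def extendView {V : Type*} (G : SimpleGraph V) (v : V)
    (k : G.neighborSet v → Fin 3) : V → Fin 3 := by
  classical exact fun y => if h : G.Adj v y then k ⟨y, h⟩ else 0

theorem extendView_apply {V : Type*} {G : SimpleGraph V} {v y : V} (c : V → Fin 3)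
    (h : G.Adj v y) : extendView G v (fun u => c u.1) y = c y := by
  simp [extendView, h]

/-- For every colour `i`, the sages of `S` other than `v` have a strategy such that, if all of them
guess wrong, then `g` tells `v` from what he sees whether his own colour is `i`. -/
def Knows {V : Type*} (G : SimpleGraph V) (S : Set V) (v : V) : Prop :=
  ∀ i : Fin 3, ∃ (f : HatStrategy G) (g : (G.neighborSet v → Fin 3) → Prop),
    ∀ c : V → Fin 3, (∀ u ∈ S, u ≠ v → ¬ GuessesRight f c u) →
      (c v = i ↔ g (fun u => c u.1))

/-- The colour `x` for which `x = 0` has truth value `p` and `x = 1` has truth value `q`; a junk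
value if both are true. -/
noncomputable def bitColor (p q : Prop) : Fin 3 := by
  classical exact if p then 0 else if q then 1 else 2

theorem eq_bitColor {x : Fin 3} {p q : Prop} (hp : x = 0 ↔ p) (hq : x = 1 ↔ q) :
    bitColor p q = x := by
  rw [bitColor, ← propext hp, ← propext hq]
  split_ifs <;> omega

/-- A vertex which knows from two sources that share no other vertex completes a winning
strategy. -/
theorem Knows.sagesWin {V : Type*} {G : SimpleGraph V} {S T : Set V} {w : V}
    (hS : Knows G S w) (hT : Knows G T w) (hST : ∀ x ∈ S, x ∈ T → x = w) : SagesWin G := by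
  classical
  obtain ⟨f₁, g₁, h₁⟩ := hS 0
  obtain ⟨f₂, g₂, h₂⟩ := hT 1
  refine ⟨fun u k => if h : u = w then
      bitColor (g₁ (fun y => k ⟨y.1, h ▸ y.2⟩)) (g₂ (fun y => k ⟨y.1, h ▸ y.2⟩))
    else if u ∈ S then f₁ u k else f₂ u k, fun c => ?_⟩
  by_contra! hc
  refine hc w ?_
  have e₁ := h₁ c fun u hu huw hr => hc u <| by
    simpa [GuessesRight, huw, hu] using hr
  have e₂ := h₂ c fun u hu huw hr => hc u <| by
    have : u ∉ S := fun hs => huw (hST u hs hu)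
    simpa [GuessesRight, huw, this] using hr
  simpa [GuessesRight] using eq_bitColor e₁ e₂

/-- The bet of `v` that "my colour is `1`" and "`w` has colour `i`" are equivalent passes his
knowledge on to a new neighbour `w`. -/
theorem Knows.insert {V : Type*} {G : SimpleGraph V} {S : Set V} {v w : V}
    (hS : Knows G S v) (hvS : v ∈ S) (hvw : G.Adj v w) (hw : w ∉ S) :
    Knows G (Insert.insert w S) w := by
  classical
  intro i
  obtain ⟨f, g, h⟩ := hS 0
  refine ⟨fun u k => if e : u = v then
      bitColor (g (fun y => k ⟨y.1, e ▸ y.2⟩)) (extendView G u k w = i) else f u k,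
    fun k => ¬ extendView G w k v = 1, fun c hc => ?_⟩
  have e₁ := h c fun u hu huv hr => hc u (Or.inr hu) (by rintro rfl; exact hw hu) <| by
    simpa [GuessesRight, huv] using hr
  have e₂ := hc v (Or.inr hvS) hvw.ne
  beta_reduce
  rw [extendView_apply c hvw.symm]
  -- A correct bet of `v` would make his guess right.
  have e₃ : ¬ (c v = 1 ↔ c w = i) := fun hb => e₂ <| by
    simpa [GuessesRight, extendView_apply c hvw] using eq_bitColor e₁ hb
  tauto

/-- The guess of an inner sage of a cycle whose predecessor and successor have colours `s`, `z`. -/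
def innerGuess (s z : Fin 3) : Fin 3 := if z = 0 then 1 else if s = 1 then 2 else 0

/-- The colour `e s` that cannot follow the colour `s` on the cycle if everyone is wrong, provided
that the first sage neither has colour `0` nor sees colour `i` at the known vertex. -/
def excluded (s : Fin 3) : Fin 3 := if s = 1 then 0 else 2

theorem excluded_start : ∀ t z : Fin 3, t ≠ 0 → t ≠ innerGuess 1 z → z ≠ excluded t := by
  decide

theorem excluded_step : ∀ s t z : Fin 3, t ≠ excluded s → t ≠ innerGuess s z →
    z ≠ excluded t := by
  decide

theorem excluded_last : ∀ s t : Fin 3, t ≠ excluded s → t ≠ innerGuess s 1 → t = 1 := by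
  decide

theorem knows_of_isCycle {V : Type*} {G : SimpleGraph V} {a : V} (w : G.Walk a a)
    (hw : w.IsCycle) : Knows G {x | x ∈ w.support} a := by
  classical
  intro i
  obtain ⟨n, hn⟩ : ∃ n, w.length = n := ⟨_, rfl⟩
  have hn3 : 3 ≤ n := hn ▸ hw.three_le_length
  obtain ⟨x, hx⟩ : ∃ x, w.getVert = x := ⟨_, rfl⟩
  have hx0 : x 0 = a := by simp [← hx]
  have hxn : x n = a := by simp [← hx, ← hn]
  have hadj : ∀ k < n, G.Adj (x k) (x (k + 1)) := fun k hk => by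
    rw [← hx]; exact w.adj_getVert_succ (hn ▸ hk)
  have hinj : Set.InjOn x {k | 1 ≤ k ∧ k ≤ n} := by
    rw [← hx, ← hn]; exact hw.getVert_injOn
  -- The position of a vertex on the cycle.
  obtain ⟨idx, hidx⟩ : ∃ idx : V → ℕ, ∀ k, 1 ≤ k → k ≤ n → idx (x k) = k :=
    ⟨Function.invFunOn x {k | 1 ≤ k ∧ k ≤ n}, fun k h1 h2 => hinj.leftInvOn_invFunOn ⟨h1, h2⟩⟩
  -- If `a` is not coloured `i`, then `x 1` and `x (n - 1)` play as inner sages who see the colour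
  -- `1` at `a`.
  refine ⟨fun u k =>
    if idx u = 1 then
      if extendView G u k a = i then 0 else innerGuess 1 (extendView G u k (x 2))
    else if idx u + 1 = n then
      if extendView G u k a = i then 1 else innerGuess (extendView G u k (x (idx u - 1))) 1
    else innerGuess (extendView G u k (x (idx u - 1))) (extendView G u k (x (idx u + 1))),
    fun k => extendView G a k (x 1) ≠ 0 ∧ extendView G a k (x (n - 1)) ≠ 1, fun c hc => ?_⟩
  have hwrong : ∀ k, 1 ≤ k → k < n → _ := fun k h1 h2 =>
    hc (x k) (by rw [Set.mem_ofPred_eq, ← hx]; exact w.getVert_mem_support k) (by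
      rw [← hxn]; intro h
      have := hinj ⟨h1, h2.le⟩ ⟨by omega, le_rfl⟩ h
      omega)
  have hlast : G.Adj (x (n - 1)) a := by
    have := hadj (n - 1) (by omega)
    rwa [Nat.sub_add_cancel (by omega), hxn] at this
  have hfirst : G.Adj (x 1) a := hx0 ▸ (hadj 0 (by omega)).symm
  have hprev : ∀ k, 1 ≤ k → k < n → G.Adj (x k) (x (k - 1)) := fun k h1 h2 => by
    have := hadj (k - 1) (by omega)
    rw [Nat.sub_add_cancel h1] at this
    exact this.symm
  have W1 : c (x 1) ≠ if c a = i then 0 else innerGuess 1 (c (x 2)) := by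
    have := hwrong 1 le_rfl (by omega)
    unfold GuessesRight at this
    beta_reduce at this
    rw [hidx 1 le_rfl (by omega), if_pos rfl, extendView_apply c hfirst,
      extendView_apply c (hadj 1 (by omega))] at this
    exact Ne.symm this
  have Wn : c (x (n - 1)) ≠ if c a = i then 1 else innerGuess (c (x (n - 1 - 1))) 1 := by
    have := hwrong (n - 1) (by omega) (by omega)
    unfold GuessesRight at this
    beta_reduce at this
    rw [hidx (n - 1) (by omega) (by omega), if_neg (by omega), if_pos (by omega),
      extendView_apply c hlast, extendView_apply c (hprev _ (by omega) (by omega))] at this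
    exact Ne.symm this
  have Wk : ∀ k, 2 ≤ k → k + 1 < n →
      c (x k) ≠ innerGuess (c (x (k - 1))) (c (x (k + 1))) := fun k h2 hk => by
    have := hwrong k (by omega) (by omega)
    unfold GuessesRight at this
    beta_reduce at this
    rw [hidx k (by omega) (by omega), if_neg (by omega), if_neg (by omega),
      extendView_apply c (hadj _ (by omega)),
      extendView_apply c (hprev _ (by omega) (by omega))] at this
    exact Ne.symm this
  beta_reduce
  rw [extendView_apply c hfirst.symm, extendView_apply c hlast.symm]
  by_cases hca : c a = i
  · rw [if_pos hca] at W1 Wn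
    exact ⟨fun _ => ⟨W1, Wn⟩, fun _ => hca⟩
  · rw [if_neg hca] at W1 Wn
    refine ⟨fun h => absurd h hca, fun ⟨h1, hl⟩ => absurd ?_ hl⟩
    have key : ∀ k, k + 2 < n → c (x (k + 2)) ≠ excluded (c (x (k + 1))) := by
      intro k
      induction k with
      | zero => exact fun _ => excluded_start _ _ h1 W1
      | succ k ih =>
        exact fun hk => excluded_step _ _ _ (ih (by omega)) (Wk (k + 2) (by omega) (by omega))
    have := key (n - 3) (by omega)
    rw [show n - 3 + 2 = n - 1 by omega, show n - 3 + 1 = n - 1 - 1 by omega] at this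
    exact excluded_last _ _ this Wn

/-- Knowledge at a vertex `v` of `S` closest to `R` among the vertices of `S` can be transported to
`R` along a shortest path, whose inner vertices avoid both `S` and `R`. -/
theorem Knows.exists_transport {V : Type*} {G : SimpleGraph V} (hG : G.Connected) (R : Set V)
    (n : ℕ) : ∀ (S : Set V) (v : V), Knows G S v → v ∈ S →
      (∀ x ∈ S, ∀ y ∈ R, n + 1 ≤ G.dist x y) → (∃ y ∈ R, G.dist v y = n + 1) →
      ∃ (S' : Set V) (z : V), z ∈ R ∧ Knows G S' z ∧ ∀ x ∈ S', x ∈ R → x = z := by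
  induction n with
  | zero =>
    rintro S v hS hv hfar ⟨y, hy, hvy⟩
    have hadj : G.Adj v y := SimpleGraph.dist_eq_one_iff_adj.mp hvy
    have hSR : ∀ x ∈ S, x ∉ R := fun x hx hxR => by simpa using hfar x hx x hxR
    exact ⟨_, y, hy, hS.insert hv hadj fun h => hSR y h hy,
      fun x hx hxR => hx.resolve_right fun h => hSR x h hxR⟩
  | succ n ih =>
    rintro S v hS hv hfar ⟨y, hy, hvy⟩
    obtain ⟨p, hp⟩ := hG.exists_walk_length_eq_dist v y
    cases p with
    | nil => simp at hvy
    | @cons _ z _ hadj p =>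
      have hzy : G.dist z y ≤ n + 1 := by
        have := SimpleGraph.dist_le p
        rw [SimpleGraph.Walk.length_cons] at hp
        omega
      have hz : ∀ y' ∈ R, n + 1 ≤ G.dist z y' := fun y' hy' => by
        have h1 := hfar v hv y' hy'
        have h2 := hG.dist_triangle (u := v) (v := z) (w := y')
        rw [SimpleGraph.dist_eq_one_iff_adj.mpr hadj] at h2
        omega
      have hzS : z ∉ S := fun h => by have := hfar z h y hy; omega
      refine ih (Insert.insert z S) z (hS.insert hv hadj hzS)
        (Or.inl rfl) ?_ ⟨y, hy, le_antisymm hzy (hz y hy)⟩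
      rintro x (rfl | hx) y' hy'
      · exact hz y' hy'
      · have := hfar x hx y' hy'
        omega

theorem knows_of_isCycle_of_mem {V : Type*} {G : SimpleGraph V} {a b : V} (w : G.Walk a a)
    (hw : w.IsCycle) (hb : b ∈ w.support) : Knows G {x | x ∈ w.support} b := by
  classical
  have := knows_of_isCycle (w.rotate b hb) ((SimpleGraph.Walk.isCycle_rotate hb).mpr hw)
  simpa only [SimpleGraph.Walk.mem_support_rotate_iff] using this

theorem win_two_disjoint_cycles {V : Type*} [Fintype V] (G : SimpleGraph V)
    (hG : G.Connected) (u v : V) (w₁ : G.Walk u u) (w₂ : G.Walk v v)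
    (h₁ : w₁.IsCycle) (h₂ : w₂.IsCycle)
    (hdisj : ∀ x : V, x ∈ w₁.support → x ∉ w₂.support) :
    SagesWin G := by
  classical
  have hex : ∃ n, ∃ x ∈ w₁.support, ∃ y ∈ w₂.support, G.dist x y = n :=
    ⟨_, u, w₁.start_mem_support, v, w₂.start_mem_support, rfl⟩
  obtain ⟨x, hx, y, hy, hxy⟩ := Nat.find_spec hex
  have hmin : ∀ x' ∈ w₁.support, ∀ y' ∈ w₂.support, G.dist x y ≤ G.dist x' y' :=
    fun x' hx' y' hy' => hxy ▸ Nat.find_min' hex ⟨x', hx', y', hy', rfl⟩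
  have hpos : 0 < G.dist x y :=
    hG.pos_dist_of_ne fun h => hdisj x hx (h ▸ hy)
  obtain ⟨n, hn⟩ := Nat.exists_eq_add_one.mpr hpos
  rw [hn] at hmin
  obtain ⟨S, z, hz, hS, hSR⟩ := Knows.exists_transport hG {y | y ∈ w₂.support} n _ x
    (knows_of_isCycle_of_mem w₁ h₁ hx) hx hmin ⟨y, hy, hn⟩
  exact hS.sagesWin (knows_of_isCycle_of_mem w₂ h₂ hz) hSR
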